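/- With ω_B and H_f as above, ω_B² ∧ L_{H_f} ω_B = 0, and consequently the Liouville volume form ω_B³ is invariant under the flow of H_f: L_{H_f}(ω_B³) = 3 ω_B² ∧ L_{H_f} ω_B = 0. -/

import Mathlib

/-!
The coefficient of a wedge product of three 2-forms on ℝ⁶ at indices `v` is a signed sum over
permutations, hence alternating in `v`. When `v` has no repetition, each summand
`α(a,b) β(c,d) γ(e,f)` uses every coordinate exactly once, so exactly three of its six indices
are position indices. A nonzero component of `ω_B` has at least one position index, and the
components of `ω_B` that depend on the base point, as well as all the components of `L_{H_f} ω_B`,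
have two. Counting position indices, every summand of `ω_B² ∧ L_{H_f} ω_B` vanishes
(`xi_L_of_injective`), and the summands of `ω_B³` only see the constant part `Σ dxᵢ ∧ dpᵢ` of
`ω_B`, so `ω_B³` has constant coefficients (`xi_ω_const`).

For a constant alternating 6-form the Lie derivative reduces to the contraction with the Jacobian
of `H_f`, which is the trace of that Jacobian times the form (`contraction_eq_zero`). The Jacobian
has zero diagonal, so both sides of the asserted identity vanish.
-/

open scoped BigOperators

noncomputable section

/-- Phase space ℝ⁶ with coordinates (x₁,x₂,x₃,p₁,p₂,p₃) indexed by 0,…,5. -/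
abbrev M6 := Fin 6 → ℝ

/-- Partial derivative in the `i`-th coordinate direction. -/
def pd (i : Fin 6) (F : M6 → ℝ) (m : M6) : ℝ := fderiv ℝ F m (Pi.single i 1)

/-- Kronecker delta, viewed as the components of the coordinate 1-form `dx_a`. -/
def dd (a i : Fin 6) : ℝ := if a = i then 1 else 0

/-- Components of `dx_a ∧ dx_b` (equivalently of `∂_a ∧ ∂_b`). -/
def w2 (a b i j : Fin 6) : ℝ := dd a i * dd b j - dd a j * dd b i

/-- Components of `dx_a ∧ dx_b ∧ dx_c` (equivalently of `∂_a ∧ ∂_b ∧ ∂_c`). -/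
def w3 (a b c i j k : Fin 6) : ℝ :=
  dd a i * (dd b j * dd c k - dd b k * dd c j)
    - dd a j * (dd b i * dd c k - dd b k * dd c i)
    + dd a k * (dd b i * dd c j - dd b j * dd c i)

/-- Components of the 2-form ω_B = Σᵢ dxᵢ∧dpᵢ + x₂² dx₂∧dx₃ + x₁x₂ dx₁∧dx₃. -/
def ωB (m : M6) (i j : Fin 6) : ℝ :=
  w2 0 3 i j + w2 1 4 i j + w2 2 5 i j
    + (m 1) ^ 2 * w2 1 2 i j + m 0 * m 1 * w2 0 2 i j

/-- Components of the bivector π_B = Σᵢ ∂xᵢ∧∂pᵢ + x₂² ∂p₂∧∂p₃ + x₁x₂ ∂p₁∧∂p₃. -/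
def πB (m : M6) (i j : Fin 6) : ℝ :=
  w2 0 3 i j + w2 1 4 i j + w2 2 5 i j
    + (m 1) ^ 2 * w2 4 5 i j + m 0 * m 1 * w2 3 5 i j

/-- The vector field H_f = x₁∂x₂ − x₂∂x₁ + p₁∂p₂ − p₂∂p₁ on ℝ⁶. -/
def HfV (m : M6) : M6 := ![-(m 1), m 0, 0, -(m 4), m 3, 0]

/-- L_{H_f} ω_B = x₁² dx₁∧dx₃ + x₁x₂ dx₂∧dx₃ (componentwise). -/
def LωB (m : M6) (i j : Fin 6) : ℝ :=
  (m 0) ^ 2 * w2 0 2 i j + m 0 * m 1 * w2 1 2 i j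

/-- Wedge product of two 2-forms, componentwise (determinant convention). -/
def w22 (α β : M6 → Fin 6 → Fin 6 → ℝ) (m : M6) (i j k l : Fin 6) : ℝ :=
  (1 / 4 : ℝ) * ∑ σ : Equiv.Perm (Fin 4),
    ((Equiv.Perm.sign σ : ℤ) : ℝ)
      * α m (![i, j, k, l] (σ 0)) (![i, j, k, l] (σ 1))
      * β m (![i, j, k, l] (σ 2)) (![i, j, k, l] (σ 3))

/-- Wedge product of a 4-form and a 2-form, componentwise (determinant convention). -/
def w42 (η : M6 → Fin 6 → Fin 6 → Fin 6 → Fin 6 → ℝ) (β : M6 → Fin 6 → Fin 6 → ℝ)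
    (m : M6) (i j k l p q : Fin 6) : ℝ :=
  (1 / 48 : ℝ) * ∑ σ : Equiv.Perm (Fin 6),
    ((Equiv.Perm.sign σ : ℤ) : ℝ)
      * η m (![i, j, k, l, p, q] (σ 0)) (![i, j, k, l, p, q] (σ 1))
          (![i, j, k, l, p, q] (σ 2)) (![i, j, k, l, p, q] (σ 3))
      * β m (![i, j, k, l, p, q] (σ 4)) (![i, j, k, l, p, q] (σ 5))

/-- Lie derivative of a 6-form along a vector field, componentwise. -/
def lie6 (X : M6 → M6)
    (η : M6 → Fin 6 → Fin 6 → Fin 6 → Fin 6 → Fin 6 → Fin 6 → ℝ)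
    (m : M6) (i j k l p q : Fin 6) : ℝ :=
  (∑ r, X m r * pd r (fun x => η x i j k l p q) m)
    + (∑ r, pd i (fun x => X x r) m * η m r j k l p q)
    + (∑ r, pd j (fun x => X x r) m * η m i r k l p q)
    + (∑ r, pd k (fun x => X x r) m * η m i j r l p q)
    + (∑ r, pd l (fun x => X x r) m * η m i j k r p q)
    + (∑ r, pd p (fun x => X x r) m * η m i j k l r q)
    + (∑ r, pd q (fun x => X x r) m * η m i j k l p r)

/-- The component of `ω_B² ∧ γ` at the multi-index `v`. -/
def xi (γ : M6 → Fin 6 → Fin 6 → ℝ) (m : M6) (v : Fin 6 → Fin 6) : ℝ :=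
  w42 (w22 ωB ωB) γ m (v 0) (v 1) (v 2) (v 3) (v 4) (v 5)

/-- The weight of an index: `1` for a position `xᵢ`, `0` for a momentum `pᵢ`. -/
def wt (a : Fin 6) : ℕ := if a < 3 then 1 else 0

lemma vec6_eta (v : Fin 6 → Fin 6) : ![v 0, v 1, v 2, v 3, v 4, v 5] = v := by
  ext i; fin_cases i <;> rfl

lemma xi_eq (γ : M6 → Fin 6 → Fin 6 → ℝ) (m : M6) (v : Fin 6 → Fin 6) :
    xi γ m v = (1 / 48 : ℝ) * ∑ σ : Equiv.Perm (Fin 6), ((Equiv.Perm.sign σ : ℤ) : ℝ)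
      * w22 ωB ωB m (v (σ 0)) (v (σ 1)) (v (σ 2)) (v (σ 3)) * γ m (v (σ 4)) (v (σ 5)) := by
  unfold xi w42
  rw [vec6_eta]

lemma xi_swap (γ : M6 → Fin 6 → Fin 6 → ℝ) (m : M6) (v : Fin 6 → Fin 6) {a b : Fin 6}
    (hab : a ≠ b) : xi γ m (v ∘ Equiv.swap a b) = - xi γ m v := by
  rw [xi_eq, xi_eq, ← mul_neg, ← Finset.sum_neg_distrib]
  congr 1
  refine Fintype.sum_equiv (Equiv.mulLeft (Equiv.swap a b)) _ _ fun σ => ?_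
  simp [Equiv.Perm.sign_swap hab]

lemma xi_eq_zero_of_eq (γ : M6 → Fin 6 → Fin 6 → ℝ) (m : M6) (v : Fin 6 → Fin 6) {a b : Fin 6}
    (hab : a ≠ b) (h : v a = v b) : xi γ m v = 0 := by
  have h1 := xi_swap γ m v hab
  have h2 : v ∘ Equiv.swap a b = v := by
    rw [Equiv.comp_swap_eq_update, h, Function.update_eq_self, ← h, Function.update_eq_self]
  rw [h2] at h1
  linarith

lemma ωB_eq_zero (m : M6) (a b : Fin 6) (h : wt a + wt b = 0) : ωB m a b = 0 := by
  revert h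
  fin_cases a <;> fin_cases b <;> simp [wt, ωB, w2, dd]

lemma ωB_const (m : M6) (a b : Fin 6) (h : wt a + wt b ≤ 1) : ωB m a b = ωB 0 a b := by
  revert h
  fin_cases a <;> fin_cases b <;> simp [wt, ωB, w2, dd]

lemma LωB_eq_zero (m : M6) (a b : Fin 6) (h : wt a + wt b ≤ 1) : LωB m a b = 0 := by
  revert h
  fin_cases a <;> fin_cases b <;> simp [wt, LωB, w2, dd]

/-- An injective multi-index has total weight three, however its first four entries are
rearranged. -/
lemma wt_sum {u : Fin 6 → Fin 6} (hu : Function.Injective u) (τ : Equiv.Perm (Fin 4)) :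
    (wt (![u 0, u 1, u 2, u 3] (τ 0)) + wt (![u 0, u 1, u 2, u 3] (τ 1)))
      + (wt (![u 0, u 1, u 2, u 3] (τ 2)) + wt (![u 0, u 1, u 2, u 3] (τ 3)))
      + (wt (u 4) + wt (u 5)) = 3 := by
  have h4 := Equiv.sum_comp τ fun i => wt (![u 0, u 1, u 2, u 3] i)
  have h6 := (Finite.injective_iff_bijective.mp hu).sum_comp wt
  have h3 : ∑ i, wt i = 3 := by decide
  rw [h3] at h6
  simp only [Fin.sum_univ_four, Fin.sum_univ_six, Matrix.cons_val] at h4 h6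
  omega

lemma xi_L_of_injective (m : M6) {v : Fin 6 → Fin 6} (hv : Function.Injective v) :
    xi LωB m v = 0 := by
  rw [xi_eq, Finset.sum_eq_zero, mul_zero]
  intro σ _
  rw [mul_assoc, w22, mul_assoc, Finset.sum_mul, Finset.sum_eq_zero, mul_zero, mul_zero]
  intro τ _
  have hw := wt_sum (hv.comp σ.injective) τ
  simp only [Function.comp_apply] at hw
  generalize ![v (σ 0), v (σ 1), v (σ 2), v (σ 3)] = u at hw ⊢
  by_cases h1 : wt (u (τ 0)) + wt (u (τ 1)) = 0
  · simp [ωB_eq_zero m _ _ h1]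
  by_cases h2 : wt (u (τ 2)) + wt (u (τ 3)) = 0
  · simp [ωB_eq_zero m _ _ h2]
  rw [LωB_eq_zero m _ _ (by omega), mul_zero]

lemma xi_L (m : M6) (v : Fin 6 → Fin 6) : xi LωB m v = 0 := by
  by_cases hv : Function.Injective v
  · exact xi_L_of_injective m hv
  · obtain ⟨a, b, h, hab⟩ := Function.not_injective_iff.mp hv
    exact xi_eq_zero_of_eq _ m v hab h

/-- The coefficients of `ω_B³` do not depend on the base point. -/
lemma xi_ω_const (m : M6) (v : Fin 6 → Fin 6) : xi ωB m v = xi ωB 0 v := by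
  by_cases hv : Function.Injective v
  · rw [xi_eq, xi_eq]
    congr 1
    refine Finset.sum_congr rfl fun σ _ => ?_
    simp only [w22, mul_assoc, Finset.sum_mul]
    congr 2
    refine Finset.sum_congr rfl fun τ _ => ?_
    have hw := wt_sum (hv.comp σ.injective) τ
    simp only [Function.comp_apply] at hw
    generalize ![v (σ 0), v (σ 1), v (σ 2), v (σ 3)] = u at hw ⊢
    by_cases h1 : wt (u (τ 0)) + wt (u (τ 1)) = 0
    · simp [ωB_eq_zero _ _ _ h1]
    by_cases h2 : wt (u (τ 2)) + wt (u (τ 3)) = 0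
    · simp [ωB_eq_zero _ _ _ h2]
    by_cases h3 : wt (v (σ 4)) + wt (v (σ 5)) = 0
    · simp [ωB_eq_zero _ _ _ h3]
    rw [ωB_const m (u (τ 0)) _ (by omega), ωB_const m (u (τ 2)) _ (by omega),
      ωB_const m (v (σ 4)) _ (by omega)]
  · obtain ⟨a, b, h, hab⟩ := Function.not_injective_iff.mp hv
    rw [xi_eq_zero_of_eq _ m v hab h, xi_eq_zero_of_eq _ 0 v hab h]

lemma pd_HfV_diag (m : M6) (a : Fin 6) : pd a (fun x => HfV x a) m = 0 := by
  have hp (i : Fin 6) : fderiv ℝ (fun x : M6 => x i) m = ContinuousLinearMap.proj i :=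
    (ContinuousLinearMap.proj (R := ℝ) (φ := fun _ : Fin 6 => ℝ) i).fderiv
  unfold pd HfV
  fin_cases a <;> simp [hp, fderiv_fun_neg]

/-- Contracting an alternating 6-form on ℝ⁶ with a matrix in each slot in turn multiplies it by
the trace; here the matrix has zero diagonal. -/
lemma contraction_eq_zero (γ : M6 → Fin 6 → Fin 6 → ℝ) (m : M6) (v : Fin 6 → Fin 6)
    (A : Fin 6 → Fin 6 → ℝ) (hA : ∀ a, A a a = 0) :
    ∑ s, ∑ r, A (v s) r * xi γ m (Function.update v s r) = 0 := by
  by_cases hv : Function.Injective v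
  · refine Finset.sum_eq_zero fun s _ => Finset.sum_eq_zero fun r _ => ?_
    by_cases hr : r = v s
    · rw [hr, hA, zero_mul]
    · -- `r` is already the value of `v` at another slot `t`, so the update repeats an index.
      obtain ⟨t, rfl⟩ := (Finite.injective_iff_surjective.mp hv) r
      have hts : t ≠ s := fun h => hr (by rw [h])
      rw [xi_eq_zero_of_eq γ m _ hts (by simp [hts]), mul_zero]
  · obtain ⟨a, b, h, hab⟩ := Function.not_injective_iff.mp hv
    -- Only the slots `a` and `b` can break the repetition, and their contributions cancel.
    rw [← Finset.sum_subset (Finset.subset_univ {a, b}), Finset.sum_pair hab,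
      ← Finset.sum_add_distrib]
    · refine Finset.sum_eq_zero fun r _ => ?_
      have hu : Function.update v a r = Function.update v b r ∘ Equiv.swap a b := by
        ext i
        by_cases hia : i = a
        · simp [hia]
        by_cases hib : i = b
        · simp [hib, hab, hab.symm, h]
        simp [Equiv.swap_apply_of_ne_of_ne hia hib, hia, hib]
      rw [hu, xi_swap γ m _ hab, h]
      ring
    · intro s _ hs
      simp only [Finset.mem_insert, Finset.mem_singleton, not_or] at hs
      refine Finset.sum_eq_zero fun r _ => ?_
      rw [xi_eq_zero_of_eq γ m _ hab (by simp [Ne.symm hs.1, Ne.symm hs.2, h]), mul_zero]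

/-- ω_B² ∧ L_{H_f}ω_B = 0, and consequently the Liouville volume form ω_B³ is invariant
under the flow of H_f: `L_{H_f}(ω_B³) = 3 ω_B² ∧ L_{H_f}ω_B = 0`. -/
theorem liouville_volume_invariant :
    (∀ m : M6, ∀ i j k l p q, w42 (w22 ωB ωB) LωB m i j k l p q = 0) ∧
    (∀ m : M6, ∀ i j k l p q,
      lie6 HfV (fun x => w42 (w22 ωB ωB) ωB x) m i j k l p q =
        3 * w42 (w22 ωB ωB) LωB m i j k l p q) := by
  have hL : ∀ m : M6, ∀ i j k l p q, w42 (w22 ωB ωB) LωB m i j k l p q = 0 :=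
    fun m i j k l p q => xi_L m ![i, j, k, l, p, q]
  refine ⟨hL, fun m i j k l p q => ?_⟩
  rw [hL, mul_zero]
  have hc : (fun x => w42 (w22 ωB ωB) ωB x i j k l p q)
      = fun _ => xi ωB 0 ![i, j, k, l, p, q] :=
    funext fun x => xi_ω_const x ![i, j, k, l, p, q]
  have hs := contraction_eq_zero ωB m ![i, j, k, l, p, q]
    (fun a r => pd a (fun x => HfV x r) m) (pd_HfV_diag m)
  have hd (r : Fin 6) : pd r (fun x => w42 (w22 ωB ωB) ωB x i j k l p q) m = 0 := by
    rw [hc]; simp [pd]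
  rw [Fin.sum_univ_six] at hs
  unfold lie6
  simp only [hd, mul_zero, Finset.sum_const_zero, zero_add]
  exact hs

end
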